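/- In the diffusive regime 0 < p < 3/4, the predictable quadratic variation of the score martingale satisfies (1/log n)·Σ_{k=1}^{n−1} (S_k/k)²/(1 − a²(S_k/k)²) → 1/(3 − 4p) almost surely as n → ∞. -/

import Mathlib

open MeasureTheory ProbabilityTheory Filter Finset
open scoped BoundedContinuousFunction ENNReal NNReal Topology

noncomputable section

variable {Ω : Type*}

/-- Position of the elephant random walk: `S n = X 1 + ⋯ + X n`. -/
def erwS (X : ℕ → Ω → ℝ) (n : ℕ) (ω : Ω) : ℝ :=
  ∑ k ∈ Finset.Icc 1 n, X k ω

/-- `V n = 4 ∑_{k=1}^{n-1} (S k / k)²`, the approximate conditional Fisher information. -/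
def erwV (X : ℕ → Ω → ℝ) (n : ℕ) (ω : Ω) : ℝ :=
  4 * ∑ k ∈ Finset.Icc 1 (n - 1), (erwS X k ω / k) ^ 2

/-- The quasi-maximum likelihood estimator `p̂ n` of the memory parameter. -/
def erwPhat (X : ℕ → Ω → ℝ) (n : ℕ) (ω : Ω) : ℝ :=
  (∑ k ∈ Finset.Icc 1 (n - 1), (erwS X k ω / k) * (X (k + 1) ω + erwS X k ω / k)) /
    (2 * ∑ k ∈ Finset.Icc 1 (n - 1), (erwS X k ω / k) ^ 2)

/-- The elephant random walk hypotheses with memory parameter `p ∈ [0,1]`: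
the steps take values in `{-1, 1}`, are adapted to the filtration `ℱ`
(which plays the role of `σ(X_1, …, X_n)`), and
`E[X_{n+1} | ℱ_n] = (2p - 1) · S_n / n` almost surely. -/
def IsERW {m0 : MeasurableSpace Ω} (μ : Measure Ω) (ℱ : Filtration ℕ m0)
    (X : ℕ → Ω → ℝ) (p : ℝ) : Prop :=
  0 ≤ p ∧ p ≤ 1 ∧
  (∀ n, 1 ≤ n → ∀ ω, X n ω = 1 ∨ X n ω = -1) ∧
  (∀ n, 1 ≤ n → Measurable[ℱ n] (X n)) ∧
  (∀ n, 1 ≤ n → μ[X (n + 1) | ℱ n] =ᵐ[μ] fun ω => (2 * p - 1) * (erwS X n ω / n))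

/-- Real harmonic numbers. -/
def hH (n : ℕ) : ℝ := ∑ k ∈ range n, 1 / ((k : ℝ) + 1)

lemma hH_succ (n : ℕ) : hH (n + 1) = hH n + 1 / ((n : ℝ) + 1) := by
  simp [hH, sum_range_succ]

lemma hH_zero : hH 0 = 0 := by simp [hH]

lemma hH_nonneg (n : ℕ) : 0 ≤ hH n := sum_nonneg fun _ _ => by positivity

lemma hH_succ_ge (n : ℕ) : 1 ≤ hH (n + 1) := by
  induction n with
  | zero => simp [hH]
  | succ n ih => rw [hH_succ]; have : 0 < 1 / (((n + 1 : ℕ) : ℝ) + 1) := by positivity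
                 linarith

lemma hH_le (n : ℕ) : hH n ≤ n := by
  induction n with
  | zero => simp [hH]
  | succ n ih =>
    rw [hH_succ]; push_cast
    have : 1 / ((n : ℝ) + 1) ≤ 1 := by rw [div_le_one (by positivity)]; simp
    linarith

lemma hH_atTop : Tendsto hH atTop atTop := Real.tendsto_sum_range_one_div_nat_succ_atTop

lemma hH_div_log : Tendsto (fun n : ℕ => hH n / Real.log n) atTop (𝓝 1) := by
  have e : ∀ n : ℕ, ((harmonic n : ℚ) : ℝ) = hH n := by
    intro n; simp [harmonic, hH]
  have h1 := Real.tendsto_harmonic_sub_log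
  have hl : Tendsto (fun n : ℕ => Real.log n) atTop atTop :=
    Real.tendsto_log_atTop.comp tendsto_natCast_atTop_atTop
  have h2 := (h1.div_atTop hl).add_const 1
  rw [zero_add] at h2
  refine h2.congr' ?_
  filter_upwards [hl.eventually_gt_atTop 0] with n hn
  rw [e]; field_simp; ring

lemma kron (d : ℕ → ℝ) (L : ℝ)
    (hN : Tendsto (fun n => ∑ k ∈ range n, d k / hH (k + 1)) atTop (𝓝 L)) :
    (fun n => ∑ k ∈ range n, d k) =o[atTop] hH := by
  set N := fun n => ∑ k ∈ range n, d k / hH (k + 1) with hNdef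
  have hs : ∀ n, N (n + 1) = N n + d n / hH (n + 1) := fun n => by simp [hNdef, sum_range_succ]
  have key : ∀ n, ∑ k ∈ range n, d k
      = hH n * (N n - L) - ∑ k ∈ range n, 1 / ((k : ℝ) + 1) * (N k - L) := by
    intro n
    induction n with
    | zero => simp [hH_zero]
    | succ n ih =>
      have := hH_succ_ge n
      have h0 : hH (n + 1) ≠ 0 := by linarith
      rw [sum_range_succ, sum_range_succ, ih, hs]
      have : d n = hH (n + 1) * (d n / hH (n + 1)) := by field_simp
      have h3 := hH_succ n
      linear_combination this - (N n - L) * h3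
  have hz : Tendsto (fun n => N n - L) atTop (𝓝 0) := by
    simpa using hN.sub_const L
  have hz' : (fun n => N n - L) =o[atTop] (fun _ => (1 : ℝ)) := (Asymptotics.isLittleO_one_iff ℝ).2 hz
  have e : (fun n => ∑ k ∈ range n, d k)
      = fun n => hH n * (N n - L) - ∑ k ∈ range n, 1 / ((k : ℝ) + 1) * (N k - L) := funext key
  rw [e]
  refine Asymptotics.IsLittleO.sub ?_ ?_
  · simpa using (Asymptotics.isBigO_refl hH atTop).mul_isLittleO hz'
  · refine Asymptotics.IsLittleO.sum_range (g := fun k => 1 / ((k : ℝ) + 1)) ?_ ?_ hH_atTop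
    · simpa using
        (Asymptotics.isBigO_refl (fun k : ℕ => 1 / ((k : ℝ) + 1)) atTop).mul_isLittleO hz'
    · intro k; simp only [Pi.zero_apply]; positivity

lemma det_main (a : ℝ) (ha : -1 < a) (ha' : a < 1 / 2) (S : ℕ → ℝ) (hS0 : S 0 = 0)
    (hst : ∀ n, (S (n + 1) - S n) ^ 2 = 1) (L : ℝ)
    (hN : Tendsto (fun n => ∑ k ∈ range n,
      (S k * (S (k + 1) - S k - a * (S k / k)) / ((k : ℝ) + 1)) / hH (k + 1)) atTop (𝓝 L)) :
    Tendsto (fun n : ℕ => (1 / Real.log n) *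
        ∑ k ∈ Finset.Icc 1 (n - 1), (S k / k) ^ 2 / (1 - a ^ 2 * (S k / k) ^ 2))
      atTop (𝓝 (1 / (1 - 2 * a))) := by
  set d : ℕ → ℝ := fun k => S k * (S (k + 1) - S k - a * (S k / k)) / ((k : ℝ) + 1) with hd
  set M : ℕ → ℝ := fun n => ∑ k ∈ range n, d k with hM
  have hMo : M =o[atTop] hH := kron d L hN
  set c := 1 - 2 * a with hc
  have hc0 : 0 < c := by linarith
  have hc3 : c < 3 := by linarith
  set U : ℕ → ℝ := fun n => S n ^ 2 / n with hU
  have hU0 : ∀ n, 0 ≤ U n := fun n => by positivity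
  have hMs : ∀ n, M (n + 1) = M n + d n := fun n => by simp [hM, sum_range_succ]
  have hUs : ∀ n, U (n + 1) = U n + (1 - c * U n) / ((n : ℝ) + 1) + 2 * d n := by
    intro n
    have h1 := hst n
    rcases Nat.eq_zero_or_pos n with rfl | hn
    · simp [hU, hd, hS0] at h1 ⊢
      simpa using h1
    · have hn' : (0 : ℝ) < n := by exact_mod_cast hn
      simp only [hU, hd, hc]; push_cast
      field_simp
      linear_combination n * h1
  set G : ℕ → ℝ := fun n => ∑ k ∈ range n, U k / ((k : ℝ) + 1) with hG
  have hid : ∀ n, U n + c * G n = hH n + 2 * M n := by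
    intro n
    induction n with
    | zero => simp [hU, hG, hM, hH_zero]
    | succ n ih =>
      have : G (n + 1) = G n + U n / ((n : ℝ) + 1) := by simp [hG, sum_range_succ]
      rw [hUs, this, hH_succ, hMs]
      linear_combination ih
  -- `U = o(hH)`
  have hUo : U =o[atTop] hH := by
    have hW : (fun n => U n - 2 * M n) =o[atTop] hH := by
      rw [Asymptotics.isLittleO_iff]
      intro ε hε
      have h2 := (hMo.const_mul_left 2)
      rw [Asymptotics.isLittleO_iff] at h2
      obtain ⟨n0, hn0⟩ := eventually_atTop.1 (h2 (half_pos hε))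
      set n1 := max n0 3
      set K := 1 / c + |U n1 - 2 * M n1| with hK
      have hcK : 1 ≤ c * K := by
        rw [hK, mul_add]
        have : c * (1 / c) = 1 := by field_simp
        have : 0 ≤ c * |U n1 - 2 * M n1| := by positivity
        linarith
      have key : ∀ n, n1 ≤ n → |U n - 2 * M n| ≤ K + ε / 2 * hH n := by
        intro n hn
        induction n, hn using Nat.le_induction with
        | base =>
          have := hH_nonneg n1
          have : 0 < 1 / c := by positivity
          have : 0 ≤ ε / 2 * hH n1 := by positivity
          linarith
        | succ n hn ih =>
          have hn3 : 3 ≤ n := le_trans (le_max_right _ _) hn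
          have hnM := hn0 n (le_trans (le_max_left _ _) hn)
          rw [Real.norm_eq_abs, Real.norm_eq_abs, abs_of_nonneg (hH_nonneg n)] at hnM
          have hn3' : (3 : ℝ) ≤ n := by exact_mod_cast hn3
          set t := 1 / ((n : ℝ) + 1) with ht
          have ht0 : 0 < t := by positivity
          have htc : c * t ≤ 1 := by
            rw [ht, mul_one_div, div_le_one (by positivity)]; linarith
          have e : U (n + 1) - 2 * M (n + 1)
              = (1 - c * t) * (U n - 2 * M n) + t * (1 - c * (2 * M n)) := by
            rw [hUs, hMs, ht]; field_simp; ring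
          rw [e, hH_succ, ← ht]
          have f1 : |1 - c * (2 * M n)| ≤ c * (K + ε / 2 * hH n) := by
            calc _ ≤ |(1:ℝ)| + |c * (2 * M n)| := abs_sub _ _
              _ = 1 + c * |2 * M n| := by rw [abs_one, abs_mul c, abs_of_pos hc0]
              _ ≤ c * K + c * (ε / 2 * hH n) := by gcongr
              _ = _ := by ring
          calc _ ≤ |(1 - c * t) * (U n - 2 * M n)| + |t * (1 - c * (2 * M n))| := abs_add_le _ _
            _ = (1 - c * t) * |U n - 2 * M n| + t * |1 - c * (2 * M n)| := by
              rw [abs_mul, abs_mul, abs_of_pos ht0, abs_of_nonneg (sub_nonneg.2 htc)]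
            _ ≤ (1 - c * t) * (K + ε / 2 * hH n) + t * (c * (K + ε / 2 * hH n)) := by
              have := sub_nonneg.2 htc
              gcongr
            _ = K + ε / 2 * hH n := by ring
            _ ≤ _ := by
              have : 0 < ε / 2 * t := by positivity
              linarith
      filter_upwards [eventually_ge_atTop n1, hH_atTop.eventually_ge_atTop (K / (ε / 2))]
        with n hn hn'
      rw [Real.norm_eq_abs, Real.norm_eq_abs, abs_of_nonneg (hH_nonneg n)]
      have := key n hn
      rw [div_le_iff₀ (by positivity)] at hn'
      linarith
    have := hW.add (hMo.const_mul_left 2)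
    simpa using this
  have hG1 : Tendsto (fun n => G n / hH n) atTop (𝓝 (1 / c)) := by
    have h1 := hUo.tendsto_div_nhds_zero
    have h2 := hMo.tendsto_div_nhds_zero
    have h3 := (((h2.const_mul 2).sub h1).const_add 1).div_const c
    simp only [mul_zero, sub_zero, add_zero] at h3
    refine h3.congr' ?_
    filter_upwards [hH_atTop.eventually_gt_atTop 0] with n hn
    have := hid n
    field_simp
    linarith
  have hGtop : Tendsto G atTop atTop := by
    have := hG1.pos_mul_atTop (by positivity) hH_atTop
    refine this.congr' ?_
    filter_upwards [hH_atTop.eventually_gt_atTop 0] with n hn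
    field_simp
  have hT : Tendsto (fun n : ℕ => (S n / n) ^ 2) atTop (𝓝 0) := by
    have h1 : U =o[atTop] (fun n : ℕ => (n : ℝ)) := hUo.trans_isBigO (by
      refine Asymptotics.IsBigO.of_bound 1 (Eventually.of_forall fun n => ?_)
      rw [Real.norm_eq_abs, abs_of_nonneg (hH_nonneg n), one_mul, Real.norm_eq_abs, Nat.abs_cast]
      exact hH_le n)
    refine h1.tendsto_div_nhds_zero.congr fun n => ?_
    simp only [hU]; rw [div_pow, div_div, sq (n : ℝ)]
  set f : ℕ → ℝ := fun k => (S k / k) ^ 2 / (1 - a ^ 2 * (S k / k) ^ 2) with hf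
  set g : ℕ → ℝ := fun k => U k / ((k : ℝ) + 1) with hg
  have hr : Tendsto (fun k : ℕ => (1 + 1 / (k : ℝ)) / (1 - a ^ 2 * (S k / k) ^ 2) - 1)
      atTop (𝓝 0) := by
    have h1 := (tendsto_one_div_atTop_nhds_zero_nat (𝕜 := ℝ)).const_add 1
    have h2 := (hT.const_mul (a ^ 2)).const_sub 1
    have := (h1.div h2 (by simp)).sub_const 1
    simpa using this
  have hfg : (fun k => f k - g k) =o[atTop] g := by
    have := (Asymptotics.isBigO_refl g atTop).mul_isLittleO ((Asymptotics.isLittleO_one_iff ℝ).2 hr)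
    simp only [mul_one] at this
    refine this.congr' ?_ EventuallyEq.rfl
    filter_upwards [eventually_gt_atTop 0] with k hk
    have hk' : (0 : ℝ) < k := by exact_mod_cast hk
    have e : (S k / k) ^ 2 = g k * (1 + 1 / (k : ℝ)) := by
      simp only [hg, hU]; field_simp
    simp only [hf]
    rw [mul_sub, mul_one, ← mul_div_assoc, ← e]
  have hsum := hfg.sum_range (fun k => by
    simp only [hg, Pi.zero_apply]; have := hU0 k; positivity) hGtop
  have h4 := hsum.tendsto_div_nhds_zero
  have h5 := ((h4.add_const 1).mul hG1).mul hH_div_log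
  simp only [zero_add, one_mul, mul_one] at h5
  refine h5.congr' ?_
  filter_upwards [hH_atTop.eventually_gt_atTop 0, hGtop.eventually_gt_atTop 0,
    eventually_gt_atTop 1] with n h6 h7 h8
  have hlog : 0 < Real.log n := Real.log_pos (by exact_mod_cast h8)
  have e1 : ∑ k ∈ Finset.Icc 1 (n - 1), f k = ∑ k ∈ range n, f k := by
    obtain ⟨m, rfl⟩ : ∃ m, n = m + 1 := ⟨n - 1, by omega⟩
    rw [Finset.sum_range_succ', Nat.add_sub_cancel, Finset.range_eq_Ico,
      Finset.sum_Ico_add' f 0 m 1]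
    simp only [hf, hS0]
    simp
    rfl
  rw [e1, sum_sub_distrib]
  have e2 : ∑ k ∈ range n, g k = G n := rfl
  rw [e2]
  field_simp
  ring

section prob

variable {m0 : MeasurableSpace Ω} {μ : Measure Ω} [IsProbabilityMeasure μ]
  {ℱ : Filtration ℕ m0} {X : ℕ → Ω → ℝ} {p : ℝ}

/-- Innovation `X (n+1) - a S_n / n`. -/
def erwD (X : ℕ → Ω → ℝ) (a : ℝ) (n : ℕ) (ω : Ω) : ℝ :=
  X (n + 1) ω - a * (erwS X n ω / n)

/-- Normalised martingale. -/
def erwN (X : ℕ → Ω → ℝ) (a : ℝ) (n : ℕ) (ω : Ω) : ℝ :=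
  ∑ k ∈ range n, (erwS X k ω * erwD X a k ω / ((k : ℝ) + 1)) / hH (k + 1)

lemma erwS_zero (ω : Ω) : erwS X 0 ω = 0 := by simp [erwS]

lemma erwS_succ (n : ℕ) (ω : Ω) : erwS X (n + 1) ω = erwS X n ω + X (n + 1) ω := by
  simp [erwS, Finset.sum_Icc_succ_top]

lemma erwN_succ (a : ℝ) (n : ℕ) (ω : Ω) : erwN X a (n + 1) ω = erwN X a n ω +
    (erwS X n ω * erwD X a n ω / ((n : ℝ) + 1)) / hH (n + 1) := by
  simp [erwN, sum_range_succ]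

lemma erwS_abs (h : IsERW μ ℱ X p) (n : ℕ) (ω : Ω) : |erwS X n ω| ≤ n := by
  induction n with
  | zero => simp [erwS_zero]
  | succ n ih =>
    rw [erwS_succ]; push_cast
    refine (abs_add_le _ _).trans (add_le_add ih ?_)
    rcases h.2.2.1 (n + 1) (by omega) ω with h | h <;> simp [h]

lemma erwD_abs (h : IsERW μ ℱ X p) (n : ℕ) (ω : Ω) : |erwD X (2 * p - 1) n ω| ≤ 2 := by
  have h1 : |X (n + 1) ω| ≤ 1 := by
    rcases h.2.2.1 (n + 1) (by omega) ω with h | h <;> simp [h]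
  have h2 : |erwS X n ω / n| ≤ 1 := by
    rw [abs_div, Nat.abs_cast]
    exact div_le_one_of_le₀ (erwS_abs h n ω) (by positivity)
  have h3 : |2 * p - 1| ≤ 1 := by
    rw [abs_le]; constructor <;> linarith [h.1, h.2.1]
  unfold erwD
  refine (abs_sub _ _).trans ?_
  rw [abs_mul]
  nlinarith [abs_nonneg (2 * p - 1), abs_nonneg (erwS X n ω / n)]

lemma erwN_abs (h : IsERW μ ℱ X p) (n : ℕ) (ω : Ω) : |erwN X (2 * p - 1) n ω| ≤ 2 * n := by
  induction n with
  | zero => simp [erwN]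
  | succ n ih =>
    rw [erwN_succ]; push_cast
    refine (abs_add_le _ _).trans ?_
    have h1 := hH_succ_ge n
    have h2 : |erwS X n ω * erwD X (2 * p - 1) n ω / ((n : ℝ) + 1) / hH (n + 1)| ≤ 2 := by
      rw [abs_div, abs_div, abs_mul, abs_of_nonneg (hH_nonneg (n + 1)),
        abs_of_pos (by positivity : (0 : ℝ) < n + 1), div_div]
      refine div_le_of_le_mul₀ (by have := hH_nonneg (n + 1); positivity) (by norm_num) ?_
      have h3 := mul_le_mul (erwS_abs h n ω) (erwD_abs h n ω) (abs_nonneg _) (Nat.cast_nonneg n)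
      nlinarith [(Nat.cast_nonneg n : (0 : ℝ) ≤ n)]
    linarith

lemma erwS_meas (h : IsERW μ ℱ X p) (n : ℕ) : Measurable[ℱ n] (erwS X n) := by
  have : erwS X n = fun ω => ∑ k ∈ Finset.Icc 1 n, X k ω := rfl
  rw [this]
  refine Finset.measurable_fun_sum _ fun k hk => ?_
  rw [Finset.mem_Icc] at hk
  exact (h.2.2.2.1 k hk.1).mono (ℱ.mono hk.2) le_rfl

lemma erwD_meas (h : IsERW μ ℱ X p) (a : ℝ) (n : ℕ) : Measurable[ℱ (n + 1)] (erwD X a n) := by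
  have h1 := h.2.2.2.1 (n + 1) (by omega)
  have h2 := (erwS_meas h n).mono (ℱ.mono (Nat.le_succ n)) le_rfl
  exact h1.sub ((h2.div_const _).const_mul _)

lemma erwN_meas (h : IsERW μ ℱ X p) (a : ℝ) (n : ℕ) : Measurable[ℱ n] (erwN X a n) := by
  have : erwN X a n = fun ω => ∑ k ∈ range n,
    (erwS X k ω * erwD X a k ω / ((k : ℝ) + 1)) / hH (k + 1) := rfl
  rw [this]
  refine Finset.measurable_fun_sum _ fun k hk => ?_
  rw [Finset.mem_range] at hk
  have h1 := (erwS_meas h k).mono (ℱ.mono hk.le) le_rfl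
  have h2 := (erwD_meas h a k).mono (ℱ.mono (Nat.succ_le_of_lt hk)) le_rfl
  exact ((h1.mul h2).div_const _).div_const _

lemma bdd_int {Y : Ω → ℝ} (hY : Measurable Y) (B : ℝ) (hB : ∀ ω, |Y ω| ≤ B) : Integrable Y μ :=
  Integrable.of_bound hY.aestronglyMeasurable B (Eventually.of_forall hB)

lemma erwD_int (h : IsERW μ ℱ X p) (n : ℕ) : Integrable (erwD X (2 * p - 1) n) μ :=
  bdd_int ((erwD_meas h _ n).mono (ℱ.le _) le_rfl) 2 (erwD_abs h n)

lemma erwD_condExp (h : IsERW μ ℱ X p) (n : ℕ) (hn : 1 ≤ n) :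
    μ[erwD X (2 * p - 1) n | ℱ n] =ᵐ[μ] 0 := by
  have hX : Integrable (X (n + 1)) μ :=
    bdd_int ((h.2.2.2.1 (n + 1) (by omega)).mono (ℱ.le _) le_rfl) 1 (fun ω => by
      rcases h.2.2.1 (n + 1) (by omega) ω with h | h <;> simp [h])
  have hZm : Measurable[ℱ n] (fun ω => (2 * p - 1) * (erwS X n ω / n)) :=
    ((erwS_meas h n).div_const _).const_mul _
  have hS : Integrable (erwS X n) μ :=
    bdd_int ((erwS_meas h n).mono (ℱ.le _) le_rfl) n (erwS_abs h n)
  have hZ : Integrable (fun ω => (2 * p - 1) * (erwS X n ω / n)) μ :=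
    (hS.div_const _).const_mul _
  have e : erwD X (2 * p - 1) n = X (n + 1) - fun ω => (2 * p - 1) * (erwS X n ω / n) := rfl
  rw [e]
  refine (condExp_sub hX hZ _).trans ?_
  rw [condExp_of_stronglyMeasurable (ℱ.le n) hZm.stronglyMeasurable hZ]
  filter_upwards [h.2.2.2.2 n hn] with ω hω
  simp [hω]

lemma mulD_condExp (h : IsERW μ ℱ X p) (n : ℕ) (hn : 1 ≤ n) {Y : Ω → ℝ}
    (hY : Measurable[ℱ n] Y) (B : ℝ) (hB : ∀ ω, |Y ω| ≤ B) :
    μ[Y * erwD X (2 * p - 1) n | ℱ n] =ᵐ[μ] 0 := by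
  refine (condExp_stronglyMeasurable_mul_of_bound (ℱ.le n) hY.stronglyMeasurable (erwD_int h n) B
    (Eventually.of_forall hB)).trans ?_
  filter_upwards [erwD_condExp h n hn] with ω hω
  simp [hω]

lemma mulD_integral (h : IsERW μ ℱ X p) (n : ℕ) (hn : 1 ≤ n) {Y : Ω → ℝ}
    (hY : Measurable[ℱ n] Y) (B : ℝ) (hB : ∀ ω, |Y ω| ≤ B) :
    ∫ ω, Y ω * erwD X (2 * p - 1) n ω ∂μ = 0 := by
  have := integral_condExp (μ := μ) (f := Y * erwD X (2 * p - 1) n) (ℱ.le n)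
  rw [integral_congr_ae (mulD_condExp h n hn hY B hB)] at this
  simpa using this.symm

lemma erwS_sq_int (h : IsERW μ ℱ X p) (n : ℕ) : Integrable (fun ω => erwS X n ω ^ 2) μ :=
  bdd_int (((erwS_meas h n).mono (ℱ.le _) le_rfl).pow_const 2) ((n : ℝ) ^ 2) (fun ω => by
    rw [abs_pow]; have := erwS_abs h n ω; gcongr)

lemma erwN_sq_int (h : IsERW μ ℱ X p) (n : ℕ) :
    Integrable (fun ω => erwN X (2 * p - 1) n ω ^ 2) μ :=
  bdd_int (((erwN_meas h _ n).mono (ℱ.le _) le_rfl).pow_const 2) ((2 * n : ℝ) ^ 2) (fun ω => by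
    rw [abs_pow]; have := erwN_abs h n ω; gcongr)

lemma int3 {f g k : Ω → ℝ} (hf : Integrable f μ) (hg : Integrable g μ) (hk : Integrable k μ) :
    ∫ ω, f ω + g ω + k ω ∂μ = ∫ ω, f ω ∂μ + ∫ ω, g ω ∂μ + ∫ ω, k ω ∂μ := by
  have h1 : Integrable (fun ω => f ω + g ω) μ := hf.add hg
  rw [integral_add h1 hk, integral_add hf hg]

lemma erwS_second (h : IsERW μ ℱ X p) (hp' : p < 3 / 4) :
    ∃ C : ℝ, 0 < C ∧ ∀ n : ℕ, ∫ ω, erwS X n ω ^ 2 ∂μ ≤ C * n := by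
  set a := 2 * p - 1 with ha
  set d := max a 0 with hd
  have hd0 : 0 ≤ d := le_max_right _ _
  have had : a ≤ d := le_max_left _ _
  have hd1 : 0 < 1 - 2 * d := by
    have : d < 1 / 2 := max_lt (by linarith) (by norm_num)
    linarith
  refine ⟨1 / (1 - 2 * d), by positivity, fun n => ?_⟩
  set C := 1 / (1 - 2 * d) with hC
  have hC0 : 0 < C := by positivity
  have hC1 : C * (1 - 2 * d) = 1 := by rw [hC]; field_simp
  induction n with
  | zero => simp [erwS_zero]
  | succ n ih =>
    have e : ∀ ω, erwS X (n + 1) ω ^ 2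
        = (1 + 2 * a / n) * erwS X n ω ^ 2 + 1 + 2 * (erwS X n ω * erwD X a n ω) := by
      intro ω
      have h1 : X (n + 1) ω ^ 2 = 1 := by
        rcases h.2.2.1 (n + 1) (by omega) ω with h | h <;> simp [h]
      rw [erwS_succ, erwD]
      linear_combination h1
    have i1 := erwS_sq_int h n
    have i2 : Integrable (fun ω => erwS X n ω * erwD X a n ω) μ :=
      (erwD_int h n).bdd_mul ((erwS_meas h n).mono (ℱ.le _) le_rfl).aestronglyMeasurable
        (c := n) (Eventually.of_forall (erwS_abs h n))
    have z : ∫ ω, erwS X n ω * erwD X a n ω ∂μ = 0 := by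
      rcases Nat.eq_zero_or_pos n with rfl | hn
      · simp [erwS_zero]
      · exact mulD_integral h n hn (erwS_meas h n) n (erwS_abs h n)
    simp_rw [e]
    rw [int3 (i1.const_mul _) (integrable_const _) (i2.const_mul 2), integral_const_mul, integral_const_mul, z]
    set q := ∫ ω, erwS X n ω ^ 2 ∂μ with hq
    have hq0 : 0 ≤ q := integral_nonneg fun ω => sq_nonneg _
    have hqn : q / n ≤ C := div_le_of_le_mul₀ (by positivity) hC0.le ih
    have hqn0 : 0 ≤ q / n := by positivity
    have : (1 + 2 * a / n) * q = q + 2 * (a * (q / n)) := by ring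
    have h5 : a * (q / n) ≤ d * C := mul_le_mul had hqn hqn0 hd0
    rw [this]
    simp
    nlinarith

lemma erwN_second (h : IsERW μ ℱ X p) (hp' : p < 3 / 4) :
    ∃ R : ℝ, 0 ≤ R ∧ ∀ n : ℕ, ∫ ω, erwN X (2 * p - 1) n ω ^ 2 ∂μ ≤ R := by
  obtain ⟨C, hC0, hC⟩ := erwS_second h hp'
  have key : ∀ n : ℕ, ∫ ω, erwN X (2 * p - 1) (n + 1) ω ^ 2 ∂μ ≤ 4 * C * (2 - 1 / hH (n + 1)) := by
    intro n
    induction n with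
    | zero =>
      simp [erwN, erwS_zero, hH]
      linarith
    | succ n ih =>
      set m := n + 1 with hm
      set a := 2 * p - 1 with ha
      set w : ℝ := 1 / ((m : ℝ) + 1) / hH (m + 1) with hw
      have hHm : 1 ≤ hH m := hH_succ_ge n
      have hHm1 : 1 ≤ hH (m + 1) := hH_succ_ge m
      have hw0 : 0 ≤ w := by positivity
      have e : ∀ ω, erwN X a (m + 1) ω ^ 2 = erwN X a m ω ^ 2
          + 2 * w * ((erwN X a m ω * erwS X m ω) * erwD X a m ω)
          + w ^ 2 * (erwS X m ω * erwD X a m ω) ^ 2 := by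
        intro ω
        rw [erwN_succ, hw]; ring
      have mS := (erwS_meas h m).mono (ℱ.le _) le_rfl
      have mD := (erwD_meas h a m).mono (ℱ.le _) le_rfl
      have hb : ∀ ω, |erwN X a m ω * erwS X m ω| ≤ 2 * m * m := fun ω => by
        rw [abs_mul]
        exact mul_le_mul (erwN_abs h m ω) (erwS_abs h m ω) (abs_nonneg _) (by positivity)
      have hme : Measurable[ℱ m] (fun ω => erwN X a m ω * erwS X m ω) :=
        (erwN_meas h a m).mul (erwS_meas h m)
      have i1 := erwN_sq_int h m
      have i2 : Integrable (fun ω => (erwN X a m ω * erwS X m ω) * erwD X a m ω) μ :=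
        (erwD_int h m).bdd_mul (hme.mono (ℱ.le _) le_rfl).aestronglyMeasurable
          (c := 2 * m * m) (Eventually.of_forall hb)
      have z := mulD_integral h m (by omega) hme _ hb
      have hle : ∀ ω, (erwS X m ω * erwD X a m ω) ^ 2 ≤ 4 * erwS X m ω ^ 2 := fun ω => by
        have h1 : erwD X a m ω ^ 2 ≤ 4 := by
          have := sq_le_sq' (neg_le_of_abs_le (erwD_abs h m ω)) (le_of_abs_le (erwD_abs h m ω))
          norm_num at this; exact this
        rw [mul_pow]
        nlinarith [sq_nonneg (erwS X m ω)]
      have i4 := (erwS_sq_int h m).const_mul 4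
      have i3 : Integrable (fun ω => (erwS X m ω * erwD X a m ω) ^ 2) μ := by
        refine i4.mono' ((mS.mul mD).pow_const 2).aestronglyMeasurable (Eventually.of_forall ?_)
        intro ω
        rw [Real.norm_eq_abs, abs_of_nonneg (sq_nonneg _)]
        exact hle ω
      have hI : ∫ ω, (erwS X m ω * erwD X a m ω) ^ 2 ∂μ ≤ 4 * (C * m) := by
        refine (integral_mono i3 i4 hle).trans ?_
        rw [integral_const_mul]
        exact mul_le_mul_of_nonneg_left (hC m) (by norm_num)
      simp_rw [e]
      rw [← ha] at z i1
      rw [int3 i1 (i2.const_mul _) (i3.const_mul _), integral_const_mul, integral_const_mul, z]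
      have h6 : w ^ 2 * (m : ℝ) ≤ 1 / hH m - 1 / hH (m + 1) := by
        have e1 : 1 / hH m - 1 / hH (m + 1) = 1 / ((m : ℝ) + 1) / (hH m * hH (m + 1)) := by
          have hs := hH_succ m
          have : 1 / ((m : ℝ) + 1) = hH (m + 1) - hH m := by linarith
          rw [this]; field_simp
        have e2 : w ^ 2 * (m : ℝ)
            = (1 / ((m : ℝ) + 1) * (m / ((m : ℝ) + 1))) / (hH (m + 1) * hH (m + 1)) := by
          rw [hw]; field_simp
        rw [e1, e2]
        have h7 : (m : ℝ) / ((m : ℝ) + 1) ≤ 1 := div_le_one_of_le₀ (by linarith) (by positivity)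
        have h8 : hH m ≤ hH (m + 1) := by
          have hs := hH_succ m
          have : 0 < 1 / ((m : ℝ) + 1) := by positivity
          linarith
        have h9 : 1 / ((m : ℝ) + 1) * (m / ((m : ℝ) + 1)) ≤ 1 / ((m : ℝ) + 1) :=
          mul_le_of_le_one_right (by positivity) h7
        gcongr
      have h10 := mul_le_mul_of_nonneg_left hI (sq_nonneg w)
      nlinarith
  refine ⟨4 * C * 2, by positivity, fun n => ?_⟩
  rcases n with _ | n
  · simp [erwN]; positivity
  · refine (key n).trans ?_
    have := hH_succ_ge n
    have : 0 < 1 / hH (n + 1) := by positivity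
    gcongr
    linarith

lemma erwN_mart (h : IsERW μ ℱ X p) : Martingale (erwN X (2 * p - 1)) ℱ μ := by
  refine martingale_of_condExp_sub_eq_zero_nat (fun n => (erwN_meas h _ n).stronglyMeasurable)
    (fun n => bdd_int ((erwN_meas h _ n).mono (ℱ.le _) le_rfl) _ (erwN_abs h n)) fun n => ?_
  rcases Nat.eq_zero_or_pos n with rfl | hn
  · have : erwN X (2 * p - 1) (0 + 1) - erwN X (2 * p - 1) 0 = 0 := by
      ext ω; simp [erwN, erwS_zero]
    rw [this, condExp_zero]
  · set w : ℝ := 1 / ((n : ℝ) + 1) / hH (n + 1) with hw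
    have hHm1 : 1 ≤ hH (n + 1) := hH_succ_ge n
    have hw0 : 0 ≤ w := by positivity
    have : erwN X (2 * p - 1) (n + 1) - erwN X (2 * p - 1) n
        = (fun ω => w * erwS X n ω) * erwD X (2 * p - 1) n := by
      ext ω; simp only [Pi.sub_apply, Pi.mul_apply, erwN_succ, hw]; ring
    rw [this]
    refine mulD_condExp h n hn ((erwS_meas h n).const_mul w) (w * n) fun ω => ?_
    rw [abs_mul, abs_of_nonneg hw0]
    exact mul_le_mul_of_nonneg_left (erwS_abs h n ω) hw0

lemma erwN_conv (h : IsERW μ ℱ X p) (hp' : p < 3 / 4) :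
    ∀ᵐ ω ∂μ, ∃ L, Tendsto (fun n => erwN X (2 * p - 1) n ω) atTop (𝓝 L) := by
  obtain ⟨R, hR0, hR⟩ := erwN_second h hp'
  refine (erwN_mart h).submartingale.exists_ae_tendsto_of_bdd (R := (1 + R).toNNReal) fun n => ?_
  have hint : Integrable (erwN X (2 * p - 1) n) μ :=
    bdd_int ((erwN_meas h _ n).mono (ℱ.le _) le_rfl) _ (erwN_abs h n)
  rw [eLpNorm_one_eq_lintegral_enorm, ← ofReal_integral_norm_eq_lintegral_enorm hint]
  refine ENNReal.ofReal_le_ofReal ?_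
  calc ∫ ω, ‖erwN X (2 * p - 1) n ω‖ ∂μ ≤ ∫ ω, (1 + erwN X (2 * p - 1) n ω ^ 2) ∂μ := by
        refine integral_mono hint.norm ((integrable_const _).add (erwN_sq_int h n)) fun ω => ?_
        simp only [Real.norm_eq_abs]
        rw [← sq_abs]
        nlinarith [sq_nonneg (|erwN X (2 * p - 1) n ω| - 1)]
    _ = 1 + ∫ ω, erwN X (2 * p - 1) n ω ^ 2 ∂μ := by
        rw [integral_add (integrable_const _) (erwN_sq_int h n)]; simp
    _ ≤ 1 + R := by linarith [hR n]

end prob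

/-- In the diffusive regime `0 < p < 3/4`, the predictable quadratic variation of the
score martingale satisfies
`(1/log n) ∑_{k=1}^{n-1} (S_k/k)² / (1 - a² (S_k/k)²) → 1/(3 - 4p)` almost surely. -/
theorem erw_score_qv_diffusive
    {m0 : MeasurableSpace Ω} (μ : Measure Ω) [IsProbabilityMeasure μ]
    (ℱ : Filtration ℕ m0) (X : ℕ → Ω → ℝ) (p : ℝ)
    (hERW : IsERW μ ℱ X p) (hp : 0 < p) (hp' : p < 3 / 4) :
    ∀ᵐ ω ∂μ, Tendsto (fun n : ℕ => (1 / Real.log n) *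
        ∑ k ∈ Finset.Icc 1 (n - 1), (erwS X k ω / k) ^ 2 /
          (1 - (2 * p - 1) ^ 2 * (erwS X k ω / k) ^ 2))
      atTop (𝓝 (1 / (3 - 4 * p))) := by
  filter_upwards [erwN_conv hERW hp'] with ω hω
  obtain ⟨L, hL⟩ := hω
  have e : (3 - 4 * p) = 1 - 2 * (2 * p - 1) := by ring
  rw [e]
  refine det_main (2 * p - 1) (by linarith) (by linarith) (fun n => erwS X n ω) (erwS_zero ω)
    (fun n => ?_) L (hL.congr fun n => ?_)
  · simp only [erwS_succ]
    rcases hERW.2.2.1 (n + 1) (by omega) ω with h | h <;> simp [h]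
  · simp only [erwN, erwD, erwS_succ, add_sub_cancel_left]
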